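/- arXiv:2408.10928 — 2 statements merged into one kernel-verified Lean document; each statement's English description precedes it below -/
import Mathlib

section
/- Let R be an associative unital ring and let 0 → F → P → F → 0 be a short exact sequence of left R-modules in which F is flat and P is projective. Then F is projective. -/
universe v u

/-- A left module `M` over a ring `R` is *flat* if it satisfies Villamayor's equational
criterion of flatness: every finite linear relation `∑ rᵢ • xᵢ = 0` in `M` factors
trivially.  Over an arbitrary associative unital ring this is equivalent to the usual
definition of flatness (exactness of the tensor product functor `− ⊗_R M` on right
`R`-modules). -/
def Module.IsFlat (R : Type u) [Ring R] (M : Type v) [AddCommGroup M] [Module R M] : Prop :=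
  ∀ (n : ℕ) (r : Fin n → R) (x : Fin n → M), ∑ i, r i • x i = 0 →
    ∃ (m : ℕ) (a : Fin n → Fin m → R) (y : Fin m → M),
      (∀ i, x i = ∑ j, a i j • y j) ∧ ∀ j, ∑ i, r i * a i j = 0


namespace BG

open Finsupp

section General

variable {R : Type u} [Ring R]

theorem flat_finset {M : Type*} [AddCommGroup M] [Module R M] (h : Module.IsFlat R M)
    {ι : Type*} (S : Finset ι) (r : ι → R) (x : ι → M) (hx : ∑ s ∈ S, r s • x s = 0) :
    ∃ (m : ℕ) (a : ι → Fin m → R) (y : Fin m → M),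
      (∀ s ∈ S, x s = ∑ j, a s j • y j) ∧ ∀ j, ∑ s ∈ S, r s * a s j = 0 := by
  classical
  let e := S.equivFin
  have key : ∀ {A : Type _} [AddCommMonoid A] (f : ι → A),
      ∑ k, f (e.symm k) = ∑ s ∈ S, f s := by
    intro A _ f
    rw [← Finset.sum_coe_sort S f]
    exact Equiv.sum_comp e.symm (fun s : S => f s)
  have key2 : ∀ (f : ι → R), ∑ k, f (e.symm k) = ∑ s ∈ S, f s := by
    intro f
    rw [← Finset.sum_coe_sort S f]
    exact Equiv.sum_comp e.symm (fun s : S => f s)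
  obtain ⟨m, a, y, h1, h2⟩ := h S.card (fun k => r (e.symm k)) (fun k => x (e.symm k))
    (by rw [key (fun s => r s • x s)]; exact hx)
  refine ⟨m, fun s j => if hs : s ∈ S then a (e ⟨s, hs⟩) j else 0, y, ?_, ?_⟩
  · intro s hs
    have := h1 (e ⟨s, hs⟩)
    simpa [hs] using this
  · intro j
    rw [← key2, ← h2 j]
    refine Finset.sum_congr rfl fun k _ => ?_
    simp

theorem flat_prod {M N : Type*} [AddCommGroup M] [Module R M] [AddCommGroup N] [Module R N]
    (hM : Module.IsFlat R M) (hN : Module.IsFlat R N) : Module.IsFlat R (M × N) := by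
  intro n r x hx
  have hx1 : ∑ i, r i • (x i).1 = 0 := by
    have := congrArg Prod.fst hx
    simpa [Prod.fst_sum] using this
  have hx2 : ∑ i, r i • (x i).2 = 0 := by
    have := congrArg Prod.snd hx
    simpa [Prod.snd_sum] using this
  obtain ⟨m1, a, u, h1, h2⟩ := hM n r _ hx1
  obtain ⟨m2, b, v, h3, h4⟩ := hN n r _ hx2
  refine ⟨m1 + m2, fun i => Fin.append (a i) (b i),
    Fin.append (fun j => (u j, 0)) (fun j => (0, v j)), ?_, ?_⟩
  · intro i
    rw [Fin.sum_univ_add]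
    ext
    · simp [Prod.fst_sum, h1 i]
    · simp [Prod.snd_sum, h3 i]
  · intro j
    refine Fin.addCases (fun j => ?_) (fun j => ?_) j
    · simpa using h2 j
    · simpa using h4 j

theorem flat_finsupp (B : Type*) : Module.IsFlat R (B →₀ R) := by
  classical
  intro n r x hx
  let T : Finset B := Finset.univ.biUnion fun i => (x i).support
  let e := T.equivFin
  refine ⟨T.card, fun i j => x i (e.symm j), fun j => single (e.symm j : B) 1, ?_, ?_⟩
  · intro i
    have h1 : x i = ∑ t ∈ T, x i t • single t (1 : R) := by
      conv_lhs => rw [← Finsupp.sum_single (x i)]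
      rw [Finsupp.sum_of_support_subset (s := T)]
      · simp
      · exact Finset.subset_biUnion_of_mem (fun i => (x i).support) (Finset.mem_univ i)
      · simp
    conv_lhs => rw [h1]
    rw [← Finset.sum_coe_sort T]
    exact (Equiv.sum_comp e.symm (fun s : T => x i s • single (s : B) (1 : R))).symm
  · intro j
    have := DFunLike.congr_fun hx (e.symm j : B)
    simpa [Finsupp.finsetSum_apply] using this

theorem flat_quotient {M : Type*} [AddCommGroup M] [Module R M] (hM : Module.IsFlat R M)
    (N : Submodule R M)
    (hN : ∀ g ∈ N, ∃ θ : M →ₗ[R] M, (∀ x, θ x ∈ N) ∧ θ g = g) : Module.IsFlat R (M ⧸ N) := by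
  intro n r x hx
  choose z hz using fun i => N.mkQ_surjective (x i)
  have h0 : ∑ i, r i • z i ∈ N := by
    rw [← Submodule.Quotient.mk_eq_zero, ← Submodule.mkQ_apply, map_sum]
    simpa [hz] using hx
  obtain ⟨θ, h1, h2⟩ := hN _ h0
  obtain ⟨m, a, y, h3, h4⟩ := hM n r (fun i => z i - θ (z i)) (by
    simp only [smul_sub, Finset.sum_sub_distrib]
    rw [sub_eq_zero]
    conv_lhs => rw [← h2]
    simp [map_sum])
  refine ⟨m, a, fun j => N.mkQ (y j), ?_, h4⟩
  intro i
  have := congrArg N.mkQ (h3 i)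
  rw [map_sub, map_sum, hz] at this
  have h5 : N.mkQ (θ (z i)) = 0 := by
    simpa using h1 (z i)
  rw [h5, sub_zero] at this
  simpa using this

/-- Locally split, countably generated submodules of projectives are projective. -/
theorem projective_of_countable {M L : Type*} [AddCommGroup M] [Module R M] [AddCommGroup L]
    [Module R L] [Module.Projective R L] (ι : M →ₗ[R] L)
    (h : ∀ m : M, ∃ π : L →ₗ[R] M, π (ι m) = m)
    (x : ℕ → M) (hx : Submodule.span R (Set.range x) = ⊤) : Module.Projective R M := by
  classical
  choose π hπ using h
  -- the recursively defined complementary maps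
  let g : ℕ → (M →ₗ[R] M) := fun n => Nat.rec LinearMap.id
    (fun n g => g - (π (g (x n))) ∘ₗ ι ∘ₗ g) n
  have g0 : g 0 = LinearMap.id := rfl
  have gs : ∀ n m, g (n + 1) m = g n m - π (g n (x n)) (ι (g n m)) := fun n m => rfl
  have hz : ∀ k n, k < n → g n (x k) = 0 := by
    intro k n hkn
    induction n with
    | zero => omega
    | succ n ih =>
      rw [gs]
      rcases Nat.lt_succ_iff_lt_or_eq.1 hkn with h | rfl
      · simp [ih h]
      · simp [hπ]
  have hfin : ∀ m, ∃ N, ∀ n, N ≤ n → g n m = 0 := by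
    intro m
    have hm : m ∈ Submodule.span R (Set.range x) := hx ▸ Submodule.mem_top
    induction hm using Submodule.span_induction with
    | mem y hy =>
      obtain ⟨k, rfl⟩ := hy
      exact ⟨k + 1, fun n hn => hz k n hn⟩
    | zero => exact ⟨0, fun n _ => map_zero _⟩
    | add y z _ _ hy hz =>
      obtain ⟨N, hN⟩ := hy
      obtain ⟨N', hN'⟩ := hz
      exact ⟨max N N', fun n hn => by
        rw [map_add, hN n (le_trans (le_max_left _ _) hn), hN' n (le_trans (le_max_right _ _) hn),
          add_zero]⟩
    | smul a y _ hy =>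
      obtain ⟨N, hN⟩ := hy
      exact ⟨N, fun n hn => by rw [map_smul, hN n hn, smul_zero]⟩
  have hsupp : ∀ m, (Function.support fun n => ι (g n m)).Finite := by
    intro m
    obtain ⟨N, hN⟩ := hfin m
    refine (Set.finite_lt_nat N).subset fun n hn => ?_
    by_contra hc
    exact hn (by simp only [hN n (not_lt.1 hc), map_zero])
  let Φ : M →ₗ[R] (ℕ →₀ L) :=
    { toFun := fun m => Finsupp.ofSupportFinite (fun n => ι (g n m)) (hsupp m)
      map_add' := fun a b => by ext n; simp [Finsupp.ofSupportFinite_coe]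
      map_smul' := fun a b => by ext n; simp [Finsupp.ofSupportFinite_coe] }
  have hΦ : ∀ m n, Φ m n = ι (g n m) := fun m n => rfl
  let Ψ : (ℕ →₀ L) →ₗ[R] M := Finsupp.lsum ℕ fun n => π (g n (x n))
  have hproj : Module.Projective R (ℕ →₀ L) :=
    Module.Projective.of_equiv' (finsuppLequivDFinsupp (ι := ℕ) (M := L) R).symm
  refine Module.Projective.of_split Φ Ψ ?_
  ext m
  obtain ⟨N, hN⟩ := hfin m
  have hs : (Φ m).support ⊆ Finset.range N := by
    intro n hn
    rw [Finset.mem_range]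
    by_contra hc
    rw [Finsupp.mem_support_iff, hΦ, hN n (not_lt.1 hc), map_zero] at hn
    exact hn rfl
  have : Ψ (Φ m) = ∑ n ∈ Finset.range N, (g n m - g (n + 1) m) := by
    simp only [Ψ, Finsupp.lsum_apply]
    rw [Finsupp.sum_of_support_subset _ hs _ (by simp)]
    refine Finset.sum_congr rfl fun n _ => ?_
    rw [hΦ, gs]; abel
  rw [LinearMap.comp_apply, this, Finset.sum_range_sub', hN N le_rfl, g0]
  simp

/-- Eilenberg swindle. -/
theorem swindle (P : Type*) [AddCommGroup P] [Module R P] [Module.Projective R P] :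
    Nonempty ((P × (ℕ →₀ (P →₀ R))) ≃ₗ[R] (ℕ →₀ (P →₀ R))) := by
  classical
  obtain ⟨s, hs⟩ := Module.projective_def'.1 ‹Module.Projective R P›
  set q := Finsupp.linearCombination R (id : P → P)
  have hqs : ∀ x, q (s x) = x := fun x => LinearMap.congr_fun hs x
  let E : (P →₀ R) →ₗ[R] (P →₀ R) := s ∘ₗ q
  let f : (P × (ℕ →₀ (P →₀ R))) →ₗ[R] (ℕ →₀ (P →₀ R)) :=
    (Finsupp.lsingle 0 ∘ₗ s ∘ₗ LinearMap.fst R P _) +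
    (Finsupp.lmapDomain _ R Nat.succ ∘ₗ Finsupp.mapRange.linearMap E ∘ₗ LinearMap.snd R P _) +
    (Finsupp.mapRange.linearMap (LinearMap.id - E) ∘ₗ LinearMap.snd R P _)
  let g2 : (ℕ →₀ (P →₀ R)) →ₗ[R] (ℕ →₀ (P →₀ R)) :=
    (Finsupp.lcomapDomain Nat.succ Nat.succ_injective ∘ₗ Finsupp.mapRange.linearMap E) +
    Finsupp.mapRange.linearMap (LinearMap.id - E)
  let g : (ℕ →₀ (P →₀ R)) →ₗ[R] (P × (ℕ →₀ (P →₀ R))) :=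
    LinearMap.prod (q ∘ₗ Finsupp.lapply 0) g2
  have f0 : ∀ a, f a 0 = s a.1 + (a.2 0 - s (q (a.2 0))) := by
    intro a
    have : Finsupp.mapDomain Nat.succ (Finsupp.mapRange E (map_zero E) a.2) 0 = 0 :=
      Finsupp.mapDomain_of_notMem_range _ _ (by simp)
    simp [f, this]
    simp [E]
  have fs : ∀ a n, f a (n + 1) = s (q (a.2 n)) + (a.2 (n + 1) - s (q (a.2 (n + 1)))) := by
    intro a n
    have : Finsupp.mapDomain Nat.succ (Finsupp.mapRange E (map_zero E) a.2) (n + 1) = E (a.2 n) := by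
      rw [← Nat.succ_eq_add_one, Finsupp.mapDomain_apply Nat.succ_injective]; simp
    simp [f, this]
    simp [E]
  have gn : ∀ y n, g2 y n = s (q (y (n + 1))) + (y n - s (q (y n))) := by
    intro y n
    simp [g2, E, Finsupp.lcomapDomain]
  have g1 : ∀ y, (g y).1 = q (y 0) := fun y => rfl
  have g2' : ∀ y, (g y).2 = g2 y := fun y => rfl
  refine ⟨LinearEquiv.ofLinearMap f g ?_ ?_⟩
  · refine LinearMap.ext fun y => Finsupp.ext fun n => ?_
    rw [LinearMap.comp_apply, LinearMap.id_apply]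
    cases n with
    | zero => rw [f0, g1, g2', gn]; simp [hqs]
    | succ n => rw [fs, g2', gn, gn]; simp [hqs]
  · refine LinearMap.ext fun a => Prod.ext ?_ (Finsupp.ext fun n => ?_)
    · rw [LinearMap.comp_apply, LinearMap.id_apply, g1, f0]; simp [hqs]
    · rw [LinearMap.comp_apply, LinearMap.id_apply, g2', gn, fs]
      cases n with
      | zero => rw [f0]; simp [hqs]
      | succ n => rw [fs]; simp [hqs]

end General

section Free

variable {R : Type u} [Ring R]

/-- The set `C` of basis elements is good: the complex restricts to an exact, locally split one. -/
structure Good {B F : Type*} [AddCommGroup F] [Module R F]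
    (ι : F →ₗ[R] (B →₀ R)) (p : (B →₀ R) →ₗ[R] F) (C : Set B) : Prop where
  map_mem : ∀ y ∈ supported R R C, ι (p y) ∈ supported R R C
  exact : ∀ f, ι f ∈ supported R R C → f ∈ (supported R R C).map p
  split : ∀ g ∈ (supported R R C).map p,
    ∃ θ : F →ₗ[R] F, (∀ x, θ x ∈ (supported R R C).map p) ∧ θ g = g

variable {B F : Type*} [AddCommGroup F] [Module R F]
  (ι : F →ₗ[R] (B →₀ R)) (p : (B →₀ R) →ₗ[R] F)

theorem villamayor_one (hp : Function.Surjective p) (hι : Function.Injective ι)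
    (hex : Function.Exact ι p) (hF : Module.IsFlat R F) (x : F) :
    ∃ θ : (B →₀ R) →ₗ[R] F, θ (ι x) = x := by
  classical
  have hrel : ∑ s ∈ (ι x).support, (ι x) s • p (single s 1) = 0 := by
    have h0 : p (ι x) = 0 := hex.apply_apply_eq_zero x
    rw [← h0]
    conv_rhs => rw [← Finsupp.sum_single (ι x)]
    rw [Finsupp.sum, map_sum]
    refine Finset.sum_congr rfl fun s _ => ?_
    rw [← map_smul]; simp
  obtain ⟨m, a, y, h1, h2⟩ := flat_finset hF _ _ _ hrel
  choose z hz using fun j => hp (y j)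
  have hk : ∀ s, ∃ k : F, s ∈ (ι x).support → ι k = single s 1 - ∑ j, a s j • z j := by
    intro s
    by_cases hs : s ∈ (ι x).support
    · have : p (single s 1 - ∑ j, a s j • z j) = 0 := by
        rw [map_sub, h1 s hs, map_sum, sub_eq_zero]
        simp [hz]
      obtain ⟨k, hk⟩ := (hex _).1 this
      exact ⟨k, fun _ => hk⟩
    · exact ⟨0, fun h => (hs h).elim⟩
  choose k hk using hk
  refine ⟨Finsupp.linearCombination R k, hι ?_⟩
  rw [Finsupp.linearCombination_apply, Finsupp.sum, map_sum]
  have e1 : ∀ s ∈ (ι x).support, ι ((ι x) s • k s) =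
      single s ((ι x) s) - ∑ j, ((ι x) s * a s j) • z j := by
    intro s hs
    rw [map_smul, hk s hs, smul_sub, Finset.smul_sum]
    simp [mul_smul]
  rw [Finset.sum_congr rfl e1, Finset.sum_sub_distrib, Finset.sum_comm]
  have e2 : ∀ j ∈ (Finset.univ : Finset (Fin m)),
      ∑ s ∈ (ι x).support, ((ι x) s * a s j) • z j = 0 := by
    intro j _
    rw [← Finset.sum_smul, h2 j, zero_smul]
  rw [Finset.sum_congr rfl e2]
  simp only [Finset.sum_const_zero, sub_zero]
  exact Finsupp.sum_single (ι x)

theorem villamayor (hp : Function.Surjective p) (hι : Function.Injective ι)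
    (hex : Function.Exact ι p) (hF : Module.IsFlat R F) {A : Type*} (S : Finset A) (x : A → F) :
    ∃ θ : (B →₀ R) →ₗ[R] F, ∀ s ∈ S, θ (ι (x s)) = x s := by
  classical
  induction S using Finset.induction_on with
  | empty => exact ⟨0, by simp⟩
  | insert b S _ ih =>
    obtain ⟨θ, hθ⟩ := ih
    obtain ⟨θ', hθ'⟩ := villamayor_one ι p hp hι hex hF (x b - θ (ι (x b)))
    refine ⟨θ + θ' - θ' ∘ₗ ι ∘ₗ θ, fun s hs => ?_⟩
    rcases Finset.mem_insert.1 hs with rfl | hs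
    · rw [map_sub, map_sub] at hθ'
      simp only [LinearMap.sub_apply, LinearMap.add_apply, LinearMap.comp_apply]
      rw [add_sub_assoc, hθ']; abel
    · simp [hθ s hs]

theorem mem_supported_of_forall {A : Type*} [AddCommGroup A] [Module R A]
    (f : (B →₀ R) →ₗ[R] A) (S : Set B) (N : Submodule R A)
    (h : ∀ s ∈ S, f (single s 1) ∈ N) : ∀ y ∈ supported R R S, f y ∈ N := by
  intro y hy
  rw [Finsupp.supported_eq_span_single] at hy
  have : Submodule.span R ((fun i => single i (1 : R)) '' S) ≤ N.comap f := by
    rw [Submodule.span_le]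
    rintro _ ⟨s, hs, rfl⟩
    exact h s hs
  exact this hy

theorem closure_step (hp : Function.Surjective p) (hι : Function.Injective ι)
    (hex : Function.Exact ι p) (hF : Module.IsFlat R F) (S : Finset B) :
    ∃ S' : Finset B, S ⊆ S' ∧
      (∀ y ∈ supported R R (S : Set B), ι (p y) ∈ supported R R (S' : Set B)) ∧
      (∀ f, ι f ∈ supported R R (S : Set B) → f ∈ (supported R R (S' : Set B)).map p) ∧
      (∃ π : (B →₀ R) →ₗ[R] F, (∀ x, π x ∈ (supported R R (S' : Set B)).map p) ∧
        ∀ y ∈ supported R R (S : Set B), π (ι (p y)) = p y) := by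
  classical
  obtain ⟨θ, hθ⟩ := villamayor ι p hp hι hex hF S (fun s => p (single s 1))
  obtain ⟨φ, hφ⟩ := Module.projective_lifting_property p θ hp
  have hφ' : ∀ x, p (φ x) = θ x := fun x => LinearMap.congr_fun hφ x
  have hθS : ∀ y ∈ supported R R (S : Set B), θ (ι (p y)) = p y := by
    intro y hy
    have := mem_supported_of_forall (θ ∘ₗ ι ∘ₗ p - p) (S : Set B) ⊥ (by
      intro s hs
      simp [hθ s hs]) y hy
    simpa [sub_eq_zero] using this
  have hw : ∀ s, ∃ w : B →₀ R, s ∈ S → ι (p w) = single s 1 - φ (ι (p (single s 1))) := by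
    intro s
    by_cases hs : s ∈ S
    · have : p (single s 1 - φ (ι (p (single s 1)))) = 0 := by
        rw [map_sub, hφ', hθ s hs, sub_self]
      obtain ⟨k, hk⟩ := (hex _).1 this
      obtain ⟨w, rfl⟩ := hp k
      exact ⟨w, fun _ => hk⟩
    · exact ⟨0, fun h => (hs h).elim⟩
  choose w hw using hw
  let T : Finset B := S.biUnion fun s => (ι (p (single s 1))).support
  let W : Finset B := S.biUnion fun s => (w s).support
  let U : Finset B := T.biUnion fun t => (φ (single t 1)).support
  have hT : ∀ y ∈ supported R R (S : Set B), ι (p y) ∈ supported R R (T : Set B) := by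
    refine mem_supported_of_forall (ι ∘ₗ p) (S : Set B) _ fun s hs => ?_
    rw [Finsupp.mem_supported]
    exact_mod_cast Finset.subset_biUnion_of_mem (fun s => (ι (p (single s 1))).support) hs
  have hle : ∀ {V : Finset B}, V ⊆ S ∪ T ∪ W ∪ U →
      supported R R (V : Set B) ≤ supported R R ((S ∪ T ∪ W ∪ U : Finset B) : Set B) :=
    fun h => Finsupp.supported_mono (by exact_mod_cast h)
  refine ⟨S ∪ T ∪ W ∪ U, fun s hs => by simp [hs], ?_, ?_, ?_⟩
  · intro y hy
    exact hle (fun s hs => by simp [hs]) (hT y hy)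
  · intro f hf
    refine ⟨Finsupp.linearCombination R w (ι f), ?_, hι ?_⟩
    · refine hle (V := W) (fun s hs => by simp [hs]) ?_
      refine mem_supported_of_forall (Finsupp.linearCombination R w) (S : Set B) _
        (fun s hs => ?_) _ hf
      rw [Finsupp.linearCombination_single, one_smul, Finsupp.mem_supported]
      exact_mod_cast Finset.subset_biUnion_of_mem (fun s => (w s).support) hs
    · have := mem_supported_of_forall
        (ι ∘ₗ p ∘ₗ Finsupp.linearCombination R w - (LinearMap.id - φ ∘ₗ ι ∘ₗ p)) (S : Set B) ⊥ (by
          intro s hs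
          simp [hw s hs]) _ hf
      simpa [sub_eq_zero, hex.apply_apply_eq_zero f] using this
  · refine ⟨θ ∘ₗ (supported R R (T : Set B)).subtype ∘ₗ Finsupp.restrictDom R R (T : Set B), ?_, ?_⟩
    · intro x
      refine mem_supported_of_forall θ (T : Set B) _ (fun t ht => ?_) _ (Subtype.prop _)
      refine ⟨φ (single t 1), hle (V := U) (fun s hs => by simp [hs]) ?_, hφ' _⟩
      rw [Finsupp.mem_supported]
      exact_mod_cast Finset.subset_biUnion_of_mem (fun t => (φ (single t 1)).support) ht
    · intro y hy
      have h1 := LinearMap.congr_fun (Finsupp.restrictDom_comp_subtype (M := R) (R := R) (T : Set B))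
        ⟨_, hT y hy⟩
      simp only [LinearMap.comp_apply, Submodule.subtype_apply, LinearMap.id_apply] at h1 ⊢
      rw [h1]
      exact hθS y hy

theorem mem_supported_directed {I : Type*} [Nonempty I] (C : I → Set B)
    (hC : Directed (· ⊆ ·) C) (y : B →₀ R) (hy : y ∈ supported R R (⋃ i, C i)) :
    ∃ i, y ∈ supported R R (C i) := by
  rw [Finsupp.mem_supported] at hy
  obtain ⟨i, hi⟩ := hC.exists_mem_subset_of_finset_subset_biUnion hy
  exact ⟨i, hi⟩

theorem countable_step (hp : Function.Surjective p) (hι : Function.Injective ι)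
    (hex : Function.Exact ι p) (hF : Module.IsFlat R F) (b : B) :
    ∃ D : Set B, b ∈ D ∧ Good ι p D ∧ Module.Projective R ((supported R R D).map p) := by
  classical
  choose cl hcl h1 h2 h3 using closure_step ι p hp hι hex hF
  obtain ⟨S, hS0, hSs⟩ : ∃ S : ℕ → Finset B, S 0 = {b} ∧ ∀ n, S (n + 1) = cl (S n) :=
    ⟨fun n => Nat.rec {b} (fun _ s => cl s) n, rfl, fun n => rfl⟩
  let T : ℕ → Set B := fun n => ↑(S n)
  have hmono : Monotone T := by
    refine monotone_nat_of_le_succ fun n => ?_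
    exact Finset.coe_subset.2 (hSs n ▸ hcl (S n))
  let D : Set B := ⋃ n : ℕ, (S n : Set B)
  have hD : ∀ y ∈ supported R R D, ∃ n, y ∈ supported R R (S n : Set B) :=
    mem_supported_directed T hmono.directed_le
  have hle : ∀ n, supported R R (cl (S n) : Set B) ≤ supported R R D := fun n =>
    hSs n ▸ Finsupp.supported_mono (Set.subset_iUnion (fun n : ℕ => (S n : Set B)) (n + 1))
  refine ⟨D, Set.mem_iUnion.2 ⟨0, by simp [hS0]⟩, ⟨?_, ?_, ?_⟩, ?_⟩
  · intro y hy
    obtain ⟨n, hn⟩ := hD y hy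
    exact hle n (h1 _ _ hn)
  · intro f hf
    obtain ⟨n, hn⟩ := hD _ hf
    exact Submodule.map_mono (hle n) (h2 _ _ hn)
  · rintro _ ⟨y, hy, rfl⟩
    obtain ⟨n, hn⟩ := hD y hy
    obtain ⟨π, hπ, hπ'⟩ := h3 (S n)
    exact ⟨π ∘ₗ ι, fun x => Submodule.map_mono (hle n) (hπ _), hπ' y hn⟩
  · have hDc : D.Countable := Set.countable_iUnion fun n => (S n).countable_toSet
    obtain ⟨e, he⟩ := hDc.exists_eq_range ⟨b, Set.mem_iUnion.2 ⟨0, by simp [hS0]⟩⟩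
    have heD : ∀ n, e n ∈ D := fun n => he ▸ Set.mem_range_self n
    refine projective_of_countable (ι ∘ₗ ((supported R R D).map p).subtype) ?_
      (fun n => ⟨p (single (e n) 1), Submodule.mem_map_of_mem
        (Finsupp.single_mem_supported R 1 (heD n))⟩) ?_
    · rintro ⟨_, y, hy, rfl⟩
      obtain ⟨n, hn⟩ := hD y hy
      obtain ⟨π, hπ, hπ'⟩ := h3 (S n)
      refine ⟨π.codRestrict _ fun x => Submodule.map_mono (hle n) (hπ x), ?_⟩
      ext
      exact hπ' y hn
    · apply Submodule.map_injective_of_injective ((supported R R D).map p).injective_subtype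
      have hsp : (supported R R D).map p = Submodule.span R (Set.range fun n => p (single (e n) 1)) := by
        rw [Finsupp.supported_eq_span_single, Submodule.map_span, he, ← Set.range_comp,
          ← Set.range_comp]
        rfl
      rw [Submodule.map_span, Submodule.map_top, Submodule.range_subtype, ← Set.range_comp]
      exact hsp.symm

end Free

section Ext

variable {R : Type u} [Ring R]
variable {B F : Type*} [AddCommGroup F] [Module R F]
  (ι : F →ₗ[R] (B →₀ R)) (p : (B →₀ R) →ₗ[R] F)

theorem extend_step (hp : Function.Surjective p)
    (hex : Function.Exact ι p) (hF : Module.IsFlat R F) (C : Set B) (hC : Good ι p C)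
    (b : B) (hb : b ∉ C) :
    ∃ C1 : Set B, C ⊆ C1 ∧ b ∈ C1 ∧ Good ι p C1 ∧
      ∀ σ : (supported R R C).map p →ₗ[R] (B →₀ R), (∀ x, p (σ x) = x) →
        ∃ σ1 : (supported R R C1).map p →ₗ[R] (B →₀ R), (∀ x, p (σ1 x) = x) ∧
          ∀ f hf hf1, σ1 ⟨f, hf1⟩ = σ ⟨f, hf⟩ := by
  classical
  set N := (supported R R C).map p with hN
  let res : (B →₀ R) →ₗ[R] ((Cᶜ : Set B) →₀ R) := Finsupp.lsubtypeDomain (Cᶜ : Set B)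
  let ext : ((Cᶜ : Set B) →₀ R) →ₗ[R] (B →₀ R) := Finsupp.lmapDomain R R Subtype.val
  have res_apply : ∀ x i, res x i = x (i : B) := fun x i => rfl
  have ext_apply : ∀ z (i : (Cᶜ : Set B)), ext z (i : B) = z i := fun z i =>
    Finsupp.mapDomain_apply Subtype.val_injective z i
  have res_ext : ∀ z, res (ext z) = z := fun z => by
    ext i; rw [res_apply, ext_apply]
  have hsub : ∀ x, x - ext (res x) ∈ supported R R C := by
    intro x
    rw [Finsupp.mem_supported']
    intro i hi
    have := ext_apply (res x) ⟨i, hi⟩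
    rw [Finsupp.sub_apply, this, res_apply, sub_self]
  have res_zero : ∀ x, res x = 0 ↔ x ∈ supported R R C := by
    intro x
    rw [Finsupp.mem_supported']
    constructor
    · intro h i hi
      exact DFunLike.congr_fun h (⟨i, hi⟩ : (Cᶜ : Set B))
    · intro h
      ext i
      exact h i i.2
  let p' : ((Cᶜ : Set B) →₀ R) →ₗ[R] (F ⧸ N) := N.mkQ ∘ₗ p ∘ₗ ext
  let ι' : (F ⧸ N) →ₗ[R] ((Cᶜ : Set B) →₀ R) := N.liftQ (res ∘ₗ ι) (by
    rintro _ ⟨y, hy, rfl⟩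
    exact (res_zero _).2 (hC.map_mem y hy))
  have hι'mk : ∀ f, ι' (N.mkQ f) = res (ι f) := fun f => by simp [ι']
  have mk_zero : ∀ f, N.mkQ f = 0 ↔ f ∈ N := fun f => by simp
  have hp'res : ∀ x, p' (res x) = N.mkQ (p x) := by
    intro x
    have : N.mkQ (p (x - ext (res x))) = 0 := (mk_zero _).2 (Submodule.mem_map_of_mem (hsub x))
    rw [map_sub, map_sub, sub_eq_zero] at this
    exact this.symm
  have hp' : Function.Surjective p' := by
    intro z
    obtain ⟨f, rfl⟩ := N.mkQ_surjective z
    obtain ⟨x, rfl⟩ := hp f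
    exact ⟨res x, hp'res x⟩
  have hι' : Function.Injective ι' := by
    rw [injective_iff_map_eq_zero]
    intro z hz
    obtain ⟨f, rfl⟩ := N.mkQ_surjective z
    rw [hι'mk, res_zero] at hz
    exact (mk_zero f).2 (hC.exact f hz)
  have hex' : Function.Exact ι' p' := by
    intro x
    constructor
    · intro hx
      obtain ⟨y, hy, hyx⟩ := (mk_zero _).1 hx
      have : p (ext x - y) = 0 := by rw [map_sub, hyx]; exact sub_self _
      obtain ⟨f, hf⟩ := (hex _).1 this
      refine ⟨N.mkQ f, ?_⟩
      rw [hι'mk, hf, map_sub, res_ext, (res_zero y).2 hy, sub_zero]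
    · rintro ⟨z, rfl⟩
      obtain ⟨f, rfl⟩ := N.mkQ_surjective z
      rw [hι'mk, hp'res, hex.apply_apply_eq_zero, map_zero]
  have hF' : Module.IsFlat R (F ⧸ N) := flat_quotient hF N hC.split
  obtain ⟨D, hbD, hD, hproj⟩ := countable_step ι' p' hp' hι' hex' hF' ⟨b, hb⟩
  set G := (supported R R D).map p' with hG
  set C1 : Set B := C ∪ Subtype.val '' D with hC1
  have hCC1 : C ⊆ C1 := Set.subset_union_left
  have K2 : ∀ x, x ∈ supported R R C1 ↔ res x ∈ supported R R D := by
    intro x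
    rw [Finsupp.mem_supported', Finsupp.mem_supported']
    constructor
    · intro h i hi
      refine h i ?_
      rintro (h' | ⟨j, hj, hji⟩)
      · exact i.2 h'
      · exact hi (Subtype.ext hji ▸ hj)
    · intro h i hi
      have hiC : i ∉ C := fun h' => hi (Or.inl h')
      exact h ⟨i, hiC⟩ fun h' => hi (Or.inr ⟨_, h', rfl⟩)
  have hNle : N ≤ (supported R R C1).map p := Submodule.map_mono (Finsupp.supported_mono hCC1)
  have K : ∀ f, f ∈ (supported R R C1).map p ↔ N.mkQ f ∈ G := by
    intro f
    constructor
    · rintro ⟨x, hx, rfl⟩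
      exact ⟨res x, (K2 x).1 hx, hp'res x⟩
    · rintro ⟨z, hz, hzf⟩
      have h1 : ext z ∈ supported R R C1 := (K2 _).2 (by rwa [res_ext])
      have h2 : f - p (ext z) ∈ N := by
        rw [← mk_zero, map_sub, ← hzf]
        exact sub_self _
      have := Submodule.add_mem _ (hNle h2) (Submodule.mem_map_of_mem (f := p) h1)
      simpa using this
  obtain ⟨τ, hτ⟩ := Module.projective_lifting_property (N.mkQ ∘ₗ p) G.subtype
    (N.mkQ_surjective.comp hp)
  have hτ' : ∀ g : G, N.mkQ (p (τ g)) = g := fun g => LinearMap.congr_fun hτ g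
  refine ⟨C1, hCC1, Or.inr ⟨_, hbD, rfl⟩, ⟨?_, ?_, ?_⟩, ?_⟩
  · intro y hy
    rw [K2, ← hι'mk, ← hp'res]
    exact hD.map_mem _ ((K2 y).1 hy)
  · intro f hf
    rw [K2, ← hι'mk] at hf
    exact (K f).2 (hD.exact _ hf)
  · intro g hg
    obtain ⟨θ', h1, h2⟩ := hD.split _ ((K g).1 hg)
    let θ1 : F →ₗ[R] F := p ∘ₗ τ ∘ₗ (θ'.codRestrict G h1) ∘ₗ N.mkQ
    have h3 : ∀ x, N.mkQ (θ1 x) = θ' (N.mkQ x) := fun x => hτ' _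
    have h4 : g - θ1 g ∈ N := by
      rw [← mk_zero, map_sub, h3, h2, sub_self]
    obtain ⟨θ2, h5, h6⟩ := hC.split _ h4
    refine ⟨θ1 + θ2 ∘ₗ (LinearMap.id - θ1), fun x => ?_, ?_⟩
    · refine Submodule.add_mem _ ?_ (hNle (h5 _))
      rw [K, h3]
      exact h1 _
    · simp only [LinearMap.add_apply, LinearMap.comp_apply, LinearMap.sub_apply,
        LinearMap.id_apply]
      rw [h6]; abel
  · intro σ hσ
    let α : (supported R R C1).map p →ₗ[R] G :=
      (N.mkQ ∘ₗ ((supported R R C1).map p).subtype).codRestrict G fun x => (K x).1 x.2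
    have hα : ∀ x, (α x : F ⧸ N) = N.mkQ x := fun x => rfl
    let β : (supported R R C1).map p →ₗ[R] N :=
      (((supported R R C1).map p).subtype - p ∘ₗ τ ∘ₗ α).codRestrict N fun x => by
        rw [← mk_zero]
        simp only [LinearMap.sub_apply, LinearMap.comp_apply, map_sub, Submodule.subtype_apply]
        rw [hτ', hα, sub_self]
    have hβ : ∀ x, (β x : F) = x - p (τ (α x)) := fun x => rfl
    refine ⟨σ ∘ₗ β + τ ∘ₗ α, fun x => ?_, fun f hf hf1 => ?_⟩
    · simp only [LinearMap.add_apply, LinearMap.comp_apply, map_add]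
      rw [hσ, hβ]; abel
    · have h1 : α ⟨f, hf1⟩ = 0 := by
        apply Subtype.ext
        rw [hα]
        exact (mk_zero f).2 hf
      have h2 : β ⟨f, hf1⟩ = ⟨f, hf⟩ := by
        apply Subtype.ext
        rw [hβ, h1]; simp
      simp only [LinearMap.add_apply, LinearMap.comp_apply, h1, h2, map_zero, add_zero]

theorem good_iUnion {I : Type*} [Nonempty I] (C : I → Set B) (hdir : Directed (· ⊆ ·) C)
    (hC : ∀ i, Good ι p (C i)) : Good ι p (⋃ i, C i) := by
  have hle : ∀ i, supported R R (C i) ≤ supported R R (⋃ i, C i) := fun i =>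
    Finsupp.supported_mono (Set.subset_iUnion C i)
  refine ⟨?_, ?_, ?_⟩
  · intro y hy
    obtain ⟨i, hi⟩ := mem_supported_directed C hdir y hy
    exact hle i ((hC i).map_mem y hi)
  · intro f hf
    obtain ⟨i, hi⟩ := mem_supported_directed C hdir _ hf
    exact Submodule.map_mono (hle i) ((hC i).exact f hi)
  · rintro _ ⟨y, hy, rfl⟩
    obtain ⟨i, hi⟩ := mem_supported_directed C hdir y hy
    obtain ⟨θ, h1, h2⟩ := (hC i).split _ (Submodule.mem_map_of_mem hi)
    exact ⟨θ, fun x => Submodule.map_mono (hle i) (h1 x), h2⟩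

theorem free_case (hι : Function.Injective ι) (hp : Function.Surjective p)
    (hex : Function.Exact ι p) (hF : Module.IsFlat R F) : Module.Projective R F := by
  classical
  let S : Set (Set B × (F →ₗ.[R] (B →₀ R))) := {q | Good ι p q.1 ∧
    q.2.domain = (supported R R q.1).map p ∧ ∀ x : q.2.domain, p (q.2 x) = x}
  have h0 : ((∅ : Set B), (⊥ : F →ₗ.[R] (B →₀ R))) ∈ S := by
    refine ⟨⟨?_, ?_, ?_⟩, ?_, ?_⟩
    · intro y hy
      simp only [Finsupp.supported_empty, Submodule.mem_bot] at hy ⊢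
      simp [hy]
    · intro f hf
      simp only [Finsupp.supported_empty, Submodule.mem_bot] at hf
      rw [hι (hf.trans (map_zero ι).symm)]
      exact Submodule.zero_mem _
    · intro g hg
      refine ⟨0, fun x => Submodule.zero_mem _, ?_⟩
      simp only [Finsupp.supported_empty, Submodule.map_bot, Submodule.mem_bot] at hg
      simp [hg]
    · simp only [Finsupp.supported_empty, Submodule.map_bot]; rfl
    · rintro ⟨x, hx⟩
      have hx' : x = 0 := (Submodule.mem_bot R).1 hx
      subst hx'
      have : (⟨0, hx⟩ : (⊥ : F →ₗ.[R] (B →₀ R)).domain) = 0 := rfl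
      simp [this]
  obtain ⟨m, -, hm⟩ := zorn_le_nonempty₀ S (by
    intro c hcS hc y hy
    have hcne : Nonempty c := ⟨⟨y, hy⟩⟩
    have hdir : DirectedOn (· ≤ ·) c := hc.directedOn
    have hdir2 : DirectedOn (· ≤ ·) (Prod.snd '' c) :=
      directedOn_image.2 (hdir.mono fun {a b} h => h.2)
    have hdir1 : Directed (· ⊆ ·) (fun q : c => q.1.1) := by
      intro a b
      obtain ⟨d, hd, h1, h2⟩ := hdir a.1 a.2 b.1 b.2
      exact ⟨⟨d, hd⟩, h1.1, h2.1⟩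
    have hne2 : (Prod.snd '' c).Nonempty := ⟨_, y, hy, rfl⟩
    refine ⟨(⋃ q : c, q.1.1, LinearPMap.sSup _ hdir2), ⟨?_, ?_, ?_⟩, ?_⟩
    · exact good_iUnion ι p _ hdir1 fun q => (hcS q.2).1
    · ext x
      rw [LinearPMap.mem_domain_sSup_iff hne2]
      constructor
      · rintro ⟨_, ⟨q, hq, rfl⟩, hx⟩
        rw [(hcS hq).2.1] at hx
        exact Submodule.map_mono (Finsupp.supported_mono
          (Set.subset_iUnion (fun q : c => q.1.1) ⟨q, hq⟩)) hx
      · rintro ⟨z, hz, rfl⟩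
        obtain ⟨q, hq⟩ := mem_supported_directed _ hdir1 z hz
        refine ⟨q.1.2, ⟨q.1, q.2, rfl⟩, ?_⟩
        rw [(hcS q.2).2.1]
        exact Submodule.mem_map_of_mem hq
    · rintro ⟨x, hx⟩
      obtain ⟨_, ⟨q, hq, rfl⟩, hx'⟩ := (LinearPMap.mem_domain_sSup_iff hne2 hdir2).1 hx
      have := LinearPMap.sSup_apply hdir2 (Set.mem_image_of_mem Prod.snd hq) ⟨x, hx'⟩
      rw [this]
      exact (hcS hq).2.2 _
    · intro z hz
      exact ⟨Set.subset_iUnion (fun q : c => q.1.1) ⟨z, hz⟩,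
        LinearPMap.le_sSup hdir2 (Set.mem_image_of_mem Prod.snd hz)⟩) _ h0
  obtain ⟨⟨hgood, hdom, hsec⟩, hmax⟩ := hm
  obtain ⟨C, ⟨dom, σ⟩⟩ := m
  dsimp only at hgood hdom
  subst hdom
  have hall : ∀ b, b ∈ C := by
    intro b
    by_contra hb
    obtain ⟨C1, hCC1, hb1, hg1, hext⟩ := extend_step ι p hp hex hF C hgood b hb
    obtain ⟨σ1, hσ1, hσ1'⟩ := hext σ hsec
    have hle : ((C, ⟨_, σ⟩) : Set B × (F →ₗ.[R] (B →₀ R))) ≤ (C1, ⟨_, σ1⟩) := by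
      refine ⟨hCC1, ⟨Submodule.map_mono (Finsupp.supported_mono hCC1), ?_⟩⟩
      rintro ⟨x, hx⟩ ⟨y, hy⟩ hxy
      obtain rfl : x = y := hxy
      exact (hσ1' x hx hy).symm
    exact hb ((hmax ⟨hg1, rfl, hσ1⟩ hle).1 hb1)
  have htop : ∀ f : F, f ∈ (supported R R C).map p := by
    intro f
    obtain ⟨x, rfl⟩ := hp f
    exact Submodule.mem_map_of_mem ((Finsupp.mem_supported _ _).2 fun b _ => hall b)
  refine Module.Projective.of_split (σ ∘ₗ LinearMap.id.codRestrict _ htop) p ?_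
  ext f
  exact hsec ⟨f, htop f⟩

end Ext

end BG

/-- **Benson–Goodearl flat/projective periodicity theorem.**
If `0 → F → P → F → 0` is a short exact sequence of left `R`-modules with `F` flat
and `P` projective, then `F` is projective. -/
theorem flat_projective_periodicity
    {R : Type u} [Ring R] {F P : Type u} [AddCommGroup F] [Module R F]
    [AddCommGroup P] [Module R P]
    (i : F →ₗ[R] P) (p : P →ₗ[R] F)
    (hi : Function.Injective i) (hp : Function.Surjective p)
    (hexact : Function.Exact i p)
    (hF : Module.IsFlat R F) (hP : Module.Projective R P) :
    Module.Projective R F := by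
  obtain ⟨e⟩ := BG.swindle (R := R) P
  -- replace the middle term by a free module on `B`
  let e0 : (ℕ →₀ (P →₀ R)) ≃ₗ[R] (ℕ × P →₀ R) := (Finsupp.curryLinearEquiv R).symm
  let e1 : (P × (ℕ × P →₀ R)) ≃ₗ[R] (ℕ × P →₀ R) :=
    ((LinearEquiv.refl R P).prodCongr e0.symm).trans (e.trans e0)
  let e2 : ((P × (ℕ × P →₀ R)) × (ℕ × P →₀ R)) ≃ₗ[R] ((ℕ × P) ⊕ (ℕ × P) →₀ R) :=
    (e1.prodCongr (LinearEquiv.refl R _)).trans (Finsupp.sumFinsuppLEquivProdFinsupp R).symm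
  let i' : (F × (ℕ × P →₀ R)) →ₗ[R] ((P × (ℕ × P →₀ R)) × (ℕ × P →₀ R)) :=
    LinearMap.inl R _ _ ∘ₗ i.prodMap LinearMap.id
  let p' : ((P × (ℕ × P →₀ R)) × (ℕ × P →₀ R)) →ₗ[R] (F × (ℕ × P →₀ R)) :=
    (p ∘ₗ LinearMap.fst R _ _).prodMap LinearMap.id
  have hi'' : ∀ x, i' x = ((i x.1, x.2), 0) := fun x => rfl
  have hp'' : ∀ x, p' x = (p x.1.1, x.2) := fun x => rfl
  have hinj : Function.Injective i' := by
    rintro ⟨x, y⟩ ⟨x', y'⟩ h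
    simp only [hi'', Prod.mk.injEq] at h
    exact Prod.ext (hi h.1.1) h.1.2
  have hsurj : Function.Surjective p' := by
    rintro ⟨f, l⟩
    obtain ⟨x, rfl⟩ := hp f
    exact ⟨((x, 0), l), rfl⟩
  have hex : Function.Exact i' p' := by
    rintro ⟨⟨x, l⟩, l'⟩
    constructor
    · intro h
      simp only [hp'', Prod.mk_eq_zero] at h
      obtain ⟨f, rfl⟩ := (hexact x).1 h.1
      exact ⟨(f, l), by rw [hi'', h.2]⟩
    · rintro ⟨⟨f, k⟩, h⟩
      rw [← h, hi'', hp'', hexact.apply_apply_eq_zero]; rfl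
  have hproj : Module.Projective R (F × (ℕ × P →₀ R)) := by
    refine BG.free_case (e2.toLinearMap ∘ₗ i') (p' ∘ₗ e2.symm.toLinearMap)
      (e2.injective.comp hinj) (hsurj.comp e2.symm.surjective) ?_
      (BG.flat_prod hF (BG.flat_finsupp _))
    intro x
    constructor
    · intro h
      obtain ⟨y, hy⟩ := (hex _).1 h
      exact ⟨y, by simp [hy]⟩
    · rintro ⟨y, rfl⟩
      simp [hex.apply_apply_eq_zero]
  exact Module.Projective.of_split (LinearMap.inl R F (ℕ × P →₀ R)) (LinearMap.fst R F _)
    (LinearMap.fst_comp_inl R F _)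
end

section
/- Let B be an abelian category with enough projective objects and all (small) coproducts, and let A• and B• be unbounded cochain complexes in B such that Ext^1_B(A^n, B^n) = 0 for every integer n. Then there is a natural isomorphism of abelian groups Ext^1_{Ch(B)}(A•, B•) ≅ Hom_{K(B)}(A•, B•[1]), where Ch(B) is the abelian category of unbounded cochain complexes in B, K(B) is the homotopy category of complexes in B (chain maps modulo chain homotopy), and B•[1] is the shift with (B•[1])^n = B^{n+1}. -/
universe v u

open CategoryTheory Limits

/-- The `n`-th Ext group of two objects of an abelian category, defined via morphisms
in the derived category. -/
noncomputable def extType {C : Type u} [Category.{v} C] [Abelian C]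
    (X Y : C) (n : ℕ) : Type (max u v) :=
  letI : HasDerivedCategory.{max u v} C := HasDerivedCategory.standard C
  letI : HasExt.{max u v} C := hasExt_of_hasDerivedCategory C
  Abelian.Ext X Y n

noncomputable instance extTypeAddCommGroup {C : Type u} [Category.{v} C] [Abelian C]
    (X Y : C) (n : ℕ) : AddCommGroup (extType X Y n) :=
  letI : HasDerivedCategory.{max u v} C := HasDerivedCategory.standard C
  letI : HasExt.{max u v} C := hasExt_of_hasDerivedCategory C
  inferInstanceAs (AddCommGroup (Abelian.Ext X Y n))

namespace ExtOneAux

open CochainComplex HomComplex CochainComplex.mappingCone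

variable {B : Type u} [Category.{v} B] [Abelian B]

/-- A degree `0` cochain `K → G` gives a chain map from `K` to the cone of the identity of `G`. -/
noncomputable def liftId {K G : CochainComplex B ℤ} (β : Cochain K G 0) :
    K ⟶ mappingCone (𝟙 G) :=
  lift (𝟙 G) (Cocycle.mk (-(δ 0 1 β)) 2 (by norm_num)
    (by rw [δ_neg, δ_δ, neg_zero])) β (by simp)

/-- A degree `-1` cochain `F → K` gives a chain map from the cone of the identity of `F` to `K`. -/
noncomputable def descId {F K : CochainComplex B ℤ} (α : Cochain F K (-1)) :
    mappingCone (𝟙 F) ⟶ K :=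
  desc (𝟙 F) α (Cocycle.homOf (Cocycle.mk (δ (-1) 0 α) 1 (by norm_num)
    (by rw [δ_δ]))) (by simp)

lemma inl_descId {F K : CochainComplex B ℤ} (α : Cochain F K (-1)) (p q : ℤ) (h : p + (-1) = q) :
    (inl (𝟙 F)).v p q h ≫ (descId α).f q = α.v p q h := by
  simp [descId]

lemma hom_ext_from {F K : CochainComplex B ℤ} (f g : mappingCone (𝟙 F) ⟶ K)
    (h : ∀ p q hpq, (inl (𝟙 F)).v p q hpq ≫ f.f q = (inl (𝟙 F)).v p q hpq ≫ g.f q) :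
    f = g := by
  have h1 : (inl (𝟙 F)).comp (Cochain.ofHom f) (add_zero (-1)) =
      (inl (𝟙 F)).comp (Cochain.ofHom g) (add_zero (-1)) := by
    ext p q hpq
    simpa using h p q hpq
  have h2 := congrArg (δ (-1) 0) h1
  simp at h2
  have h3 : inr (𝟙 F) ≫ f = inr (𝟙 F) ≫ g := (Cochain.ofHom_injective (by simpa using h2))
  ext n
  apply ext_from (𝟙 F) (n + 1) n rfl
  · exact h _ _ _
  · simpa using HomologicalComplex.congr_hom h3 n

lemma hom_ext_to {K G : CochainComplex B ℤ} (f g : K ⟶ mappingCone (𝟙 G))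
    (h : ∀ p, f.f p ≫ (snd (𝟙 G)).v p p (add_zero p) = g.f p ≫ (snd (𝟙 G)).v p p (add_zero p)) :
    f = g := by
  have h1 : (Cochain.ofHom f).comp (snd (𝟙 G)) (add_zero 0) =
      (Cochain.ofHom g).comp (snd (𝟙 G)) (add_zero 0) := by
    ext p
    simpa using h p
  have h2 := congrArg (δ 0 1) h1
  simp at h2
  ext n
  apply ext_to (𝟙 G) n (n + 1) rfl
  · simpa using Cochain.congr_v h2 n (n+1) rfl
  · exact h _

instance projective_cone (P : CochainComplex B ℤ) [∀ n, Projective (P.X n)] :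
    Projective (mappingCone (𝟙 P)) where
  factors {E X} f e he := by
    have : ∀ n, Epi (e.f n) := inferInstance
    refine ⟨descId (Cochain.mk fun p q hpq =>
      Projective.factorThru ((inl (𝟙 P)).v p q hpq ≫ f.f q) (e.f q)), ?_⟩
    apply hom_ext_from
    intro p q hpq
    rw [HomologicalComplex.comp_f, ← Category.assoc, inl_descId]
    simp

/-- A graded projective cover, with zero differential. -/
noncomputable def cover [EnoughProjectives B] (A : CochainComplex B ℤ) : CochainComplex B ℤ where
  X n := Projective.over (A.X (n - 1))
  d _ _ := 0

instance [EnoughProjectives B] (A : CochainComplex B ℤ) (n : ℤ) :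
    Projective ((cover A).X n) := inferInstanceAs (Projective (Projective.over _))

noncomputable def coverMap [EnoughProjectives B] (A : CochainComplex B ℤ) :
    mappingCone (𝟙 (cover A)) ⟶ A :=
  descId (Cochain.mk fun p q hpq =>
    (Projective.π (A.X (p - 1)) : (cover A).X p ⟶ A.X (p - 1)) ≫ (A.XIsoOfEq (by lia)).hom)

instance [EnoughProjectives B] (A : CochainComplex B ℤ) : Epi (coverMap A) := by
  have : ∀ n, Epi ((coverMap A).f n) := by
    intro n
    have h := inl_descId (F := cover A) (K := A) (Cochain.mk fun p q hpq =>
      (Projective.π (A.X (p - 1)) : (cover A).X p ⟶ A.X (p - 1)) ≫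
        (A.XIsoOfEq (by lia : p - 1 = q)).hom) (n+1) n (by lia)
    have h2 : Epi ((inl (𝟙 (cover A))).v (n+1) n (by lia) ≫ (coverMap A).f n) := by
      refine Eq.mpr (congrArg (fun f => Epi f) h) ?_
      rw [Cochain.mk_v]
      have : Epi (Projective.π (A.X (n + 1 - 1)) : (cover A).X (n+1) ⟶ A.X (n + 1 - 1)) :=
        Projective.π_epi (A.X (n + 1 - 1))
      exact epi_comp (Projective.π (A.X (n + 1 - 1)) : (cover A).X (n+1) ⟶ A.X (n + 1 - 1)) _
    exact epi_of_epi ((inl (𝟙 (cover A))).v (n+1) n (add_neg_cancel_right n 1)) _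
  exact HomologicalComplex.epi_of_epi_f _ this

/-- The projection from the cone of the identity to the shift. -/
noncomputable def mor3 (G : CochainComplex B ℤ) : mappingCone (𝟙 G) ⟶ G⟦(1 : ℤ)⟧ :=
  Cocycle.homOf ((-fst (𝟙 G)).rightShift 1 0 (zero_add 1))

/-- The short complex `G ⟶ cone (𝟙 G) ⟶ G⟦1⟧`. -/
noncomputable abbrev coneSC (G : CochainComplex B ℤ) : ShortComplex (CochainComplex B ℤ) :=
  ShortComplex.mk (inr (𝟙 G)) (mor3 G) (inr_triangleδ (𝟙 G))

lemma rotate_shortExact (G : CochainComplex B ℤ) : (coneSC G).ShortExact :=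
  HomologicalComplex.shortExact_of_degreewise_shortExact (triangleRotateShortComplex (𝟙 G))
    (fun n => (triangleRotateShortComplexSplitting (𝟙 G) n).shortExact)

lemma mor₃_homotopic (G : CochainComplex B ℤ) :
    (HomotopyCategory.quotient B (ComplexShape.up ℤ)).map (mor3 G) = 0 := by
  have h := HomotopyCategory.eq_of_homotopy _ _ (homotopyToZeroOfId G)
  rw [← Category.id_comp (mor3 G), Functor.map_comp, h, Functor.map_zero, zero_comp]

lemma factors_of_null {A G : CochainComplex B ℤ} (f : A ⟶ G⟦(1 : ℤ)⟧)
    (hf : (HomotopyCategory.quotient B (ComplexShape.up ℤ)).map f = 0) :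
    ∃ g : A ⟶ mappingCone (𝟙 G), g ≫ mor3 G = f := by
  have ho : Homotopy f 0 := HomotopyCategory.homotopyOfEq _ _ (by rw [hf, Functor.map_zero])
  obtain ⟨z, hz⟩ := Cochain.equivHomotopy _ _ ho
  refine ⟨- liftId (z.rightUnshift 0 (by norm_num)), ?_⟩
  have hz2 := Cochain.δ_rightUnshift z 0 (by norm_num) 1 0 (by norm_num)
  rw [Cochain.ofHom_zero, add_zero] at hz
  rw [← hz] at hz2
  ext n
  have h3 := Cochain.congr_v hz2 n (n+1) rfl
  have h4 : (Int.negOnePow 1 • (Cochain.ofHom f).rightUnshift 1 (zero_add 1)).v n (n+1) rfl =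
      -f.f n := by
    rw [Cochain.units_smul_v, Cochain.rightUnshift_v _ 1 (zero_add 1) n (n+1) rfl n (add_zero n)]
    simp
    exact congrArg Neg.neg (Category.comp_id (Y := G.X (n + 1)) (f.f n))
  have h5 : (mor3 G).f n = -(fst (𝟙 G)).1.v n (n+1) rfl := by
    simp [mor3, Cochain.rightShift_v _ 1 0 (zero_add 1) n n (add_zero n) (n+1) rfl]
    exact congrArg Neg.neg (Category.comp_id _)
  have h6 : (liftId (z.rightUnshift 0 (by norm_num))).f n ≫ (fst (𝟙 G)).1.v n (n+1) rfl =
      -(δ 0 1 (z.rightUnshift 0 (by norm_num))).v n (n+1) rfl := by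
    simp [liftId]
  rw [HomologicalComplex.comp_f, h5, HomologicalComplex.neg_f_apply]
  refine (Preadditive.neg_comp_neg _ _).trans ?_
  refine h6.trans ?_
  rw [h3, h4]
  exact neg_neg _

/-- extension of morphisms along a short exact sequence when `Ext¹` vanishes. -/
lemma exists_extension {C : Type u} [Category.{v} C] [Abelian C] {S : ShortComplex C}
    (hS : S.ShortExact) {Y : C} (h : Subsingleton (extType S.X₃ Y 1)) (g : S.X₁ ⟶ Y) :
    ∃ g' : S.X₂ ⟶ Y, S.f ≫ g' = g := by
  let : HasDerivedCategory.{max u v} C := HasDerivedCategory.standard C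
  let : HasExt.{max u v} C := hasExt_of_hasDerivedCategory C
  replace h : Subsingleton (Abelian.Ext S.X₃ Y 1) := h
  obtain ⟨x, hx⟩ := Abelian.Ext.contravariant_sequence_exact₁ hS Y (Abelian.Ext.mk₀ g) (add_zero 1)
    (Subsingleton.elim _ _)
  obtain ⟨g', rfl⟩ := Abelian.Ext.addEquiv₀.symm.surjective x
  refine ⟨g', ?_⟩
  apply Abelian.Ext.addEquiv₀.symm.injective
  simpa using hx

lemma exists_cone_extension {S : ShortComplex (CochainComplex B ℤ)} (hS : S.ShortExact)
    {G : CochainComplex B ℤ} (h : ∀ n, Subsingleton (extType (S.X₃.X n) (G.X n) 1))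
    (g : S.X₁ ⟶ G) : ∃ g' : S.X₂ ⟶ mappingCone (𝟙 G), S.f ≫ g' = g ≫ inr (𝟙 G) := by
  have h1 : ∀ n, ∃ g' : S.X₂.X n ⟶ G.X n, S.f.f n ≫ g' = g.f n := fun n =>
    exists_extension (hS.map_of_exact (HomologicalComplex.eval B (ComplexShape.up ℤ) n)) (h n)
      (g.f n)
  choose r hr using h1
  refine ⟨liftId (Cochain.ofHoms r), ?_⟩
  apply hom_ext_to
  intro p
  simp [liftId, hr]

lemma comp_inr_eq_zero [EnoughProjectives B] [HasExt.{max u v} (CochainComplex B ℤ)]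
    {A G : CochainComplex B ℤ} (h : ∀ n, Subsingleton (extType (A.X n) (G.X n) 1))
    (e : Abelian.Ext.{max u v} A G 1) :
    e.comp (Abelian.Ext.mk₀ (inr (𝟙 G))) (add_zero 1) = 0 := by
  let S := ShortComplex.mk (kernel.ι (coverMap A)) (coverMap A) (kernel.condition _)
  have hS : S.ShortExact :=
    { exact := ShortComplex.exact_of_f_is_kernel _ (kernelIsKernel (coverMap A))
      mono_f := inferInstanceAs (Mono (kernel.ι (coverMap A)))
      epi_g := inferInstanceAs (Epi (coverMap A)) }
  obtain ⟨x, hx⟩ := Abelian.Ext.contravariant_sequence_exact₃ hS G e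
    (Abelian.Ext.eq_zero_of_projective (P := mappingCone (𝟙 (cover A))) _) (add_zero 1)
  obtain ⟨g, rfl⟩ := Abelian.Ext.addEquiv₀.symm.surjective x
  obtain ⟨g', hg'⟩ := exists_cone_extension hS h g
  rw [← hx]
  rw [Abelian.Ext.comp_assoc_of_third_deg_zero]
  change hS.extClass.comp ((Abelian.Ext.mk₀ g).comp (Abelian.Ext.mk₀ (inr (𝟙 G))) _) _ = 0
  rw [Abelian.Ext.mk₀_comp_mk₀, ← hg', ← Abelian.Ext.mk₀_comp_mk₀,
    ShortComplex.ShortExact.extClass_comp_assoc]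

/-- The connecting homomorphism. -/
noncomputable def connecting [HasExt.{max u v} (CochainComplex B ℤ)] (A G : CochainComplex B ℤ) :
    (A ⟶ G⟦(1 : ℤ)⟧) →+ Abelian.Ext.{max u v} A G 1 :=
  ((rotate_shortExact G).extClass.postcomp A (zero_add 1)).comp
    (Abelian.Ext.addEquiv₀.symm.toAddMonoidHom)

lemma connecting_surjective [EnoughProjectives B] [HasExt.{max u v} (CochainComplex B ℤ)]
    {A G : CochainComplex B ℤ} (h : ∀ n, Subsingleton (extType (A.X n) (G.X n) 1)) :
    Function.Surjective (connecting A G) := by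
  intro e
  obtain ⟨x, hx⟩ := Abelian.Ext.covariant_sequence_exact₁ A (rotate_shortExact G) e
    (comp_inr_eq_zero h e) (zero_add 1)
  obtain ⟨g, rfl⟩ := Abelian.Ext.addEquiv₀.symm.surjective x
  exact ⟨g, hx⟩

lemma connecting_eq_zero_iff [HasExt.{max u v} (CochainComplex B ℤ)]
    {A G : CochainComplex B ℤ} (f : A ⟶ G⟦(1 : ℤ)⟧) :
    connecting A G f = 0 ↔ (HomotopyCategory.quotient B (ComplexShape.up ℤ)).map f = 0 := by
  constructor
  · intro hf
    obtain ⟨x, hx⟩ := Abelian.Ext.covariant_sequence_exact₃ A (rotate_shortExact G)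
      (Abelian.Ext.mk₀ f) (zero_add 1) hf
    obtain ⟨g, rfl⟩ := Abelian.Ext.addEquiv₀.symm.surjective x
    have : g ≫ mor3 G = f := by
      apply Abelian.Ext.addEquiv₀.symm.injective
      exact (Abelian.Ext.mk₀_comp_mk₀ _ _).symm.trans hx
    rw [← this, Functor.map_comp, mor₃_homotopic, comp_zero]
  · intro hf
    obtain ⟨g, rfl⟩ := factors_of_null f hf
    change (Abelian.Ext.mk₀ (g ≫ mor3 G)).comp
      (rotate_shortExact G).extClass (zero_add 1) = 0
    rw [← Abelian.Ext.mk₀_comp_mk₀, Abelian.Ext.comp_assoc_of_second_deg_zero]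
    have h := (rotate_shortExact G).comp_extClass
    dsimp only at h
    rw [h, Abelian.Ext.comp_zero]

end ExtOneAux

/-- Let `B` be an abelian category with enough projectives and all small coproducts,
and let `A•`, `B•` be complexes in `B` with `Ext¹_B(Aⁿ, Bⁿ) = 0` for all `n`.  Then
there is an isomorphism of abelian groups
`Ext¹_{Ch(B)}(A•, B•) ≅ Hom_{K(B)}(A•, B•[1])`. -/
theorem ext_one_iso_homotopy_hom
    {B : Type u} [Category.{v} B] [Abelian B] [EnoughProjectives B]
    [HasCoproducts.{v} B]
    (A Bc : CochainComplex B ℤ)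
    (h : ∀ n : ℤ, Subsingleton (extType (A.X n) (Bc.X n) 1)) :
    Nonempty (extType A Bc 1 ≃+
      ((HomotopyCategory.quotient B (ComplexShape.up ℤ)).obj A ⟶
        (HomotopyCategory.quotient B (ComplexShape.up ℤ)).obj (Bc⟦(1 : ℤ)⟧))) := by
  letI : HasDerivedCategory.{max u v} (CochainComplex B ℤ) := HasDerivedCategory.standard _
  letI : HasExt.{max u v} (CochainComplex B ℤ) := hasExt_of_hasDerivedCategory _
  let Q : (A ⟶ Bc⟦(1 : ℤ)⟧) →+ ((HomotopyCategory.quotient B (ComplexShape.up ℤ)).obj A ⟶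
        (HomotopyCategory.quotient B (ComplexShape.up ℤ)).obj (Bc⟦(1 : ℤ)⟧)) :=
    (HomotopyCategory.quotient B (ComplexShape.up ℤ)).mapAddHom
  have hQ : Function.Surjective Q :=
    (HomotopyCategory.quotient B (ComplexShape.up ℤ)).map_surjective
  have hk : (ExtOneAux.connecting A Bc).ker = Q.ker := by
    ext f
    exact ExtOneAux.connecting_eq_zero_iff f
  exact ⟨((QuotientAddGroup.quotientKerEquivOfSurjective _
    (ExtOneAux.connecting_surjective h)).symm.trans
    (QuotientAddGroup.quotientAddEquivOfEq hk)).trans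
    (QuotientAddGroup.quotientKerEquivOfSurjective Q hQ)⟩
end
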